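/- arXiv:1705.03240 — 2 statements merged into one kernel-verified Lean document; each statement's English description precedes it below -/
import Mathlib

section
/- Let z₁ ≠ z₂ and p₁, p₂, p₃ be pairwise distinct complex numbers, all five distinct, and let c ∈ ℂ*. Define R_i = c·(p_i−z₁)(p_i−z₂)·∏_{j≠i}(p_i−p_j)^{−2} for i = 1,2,3 (the quadratic residues of the quadratic differential c(z−z₁)(z−z₂)∏(z−p_i)^{−2}(dz)² on ℙ¹ at its three double poles). Then R₁, R₂, R₃ are not triangular: there do not exist complex numbers r₁, r₂, r₃ with r_i² = R_i and r₁ + r₂ + r₃ = 0. Equivalently, R₁² + R₂² + R₃² ≠ 2(R₁R₂ + R₂R₃ + R₃R₁). -/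
/-!
If the numerator `N` of `f = N / ∏ (z - pᵢ)²`, of degree at most two, is the square of a linear
polynomial, then `f = g²` where the one-form `g dz` has simple poles at the `pᵢ` and none at
infinity; by the residue theorem its residues, which are square roots of the `Rᵢ`, sum to zero.
Hence `λ(R₁, R₂, R₃) = R₁² + R₂² + R₃² - 2(R₁R₂ + R₂R₃ + R₃R₁)` vanishes wherever the discriminant
of `N` does. Both are quadratic forms in the coefficients of `N` and the discriminant is
irreducible over `ℂ`, so they are proportional, with factor `∏_{i<j} (pᵢ - pⱼ)⁻²`; the resulting
identity holds over every field. Since the zeros of `N` are distinct, `λ(R₁, R₂, R₃) ≠ 0`, whereas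
`λ` vanishes on triangular triples by Heron's factorization.
-/

section CommRing

variable {R : Type*} [CommRing R]

/-- Triangular triples: some choice of square roots of the three entries sums to zero. -/
def IsTriangular (x y z : R) : Prop :=
  ∃ r s t : R, r ^ 2 = x ∧ s ^ 2 = y ∧ t ^ 2 = z ∧ r + s + t = 0

/-- The Källén triangle function `λ(x, y, z)`, which detects triangular triples. -/
def kallen (x y z : R) : R :=
  x ^ 2 + y ^ 2 + z ^ 2 - 2 * (x * y + y * z + z * x)

theorem kallen_sq (r s t : R) :
    kallen (r ^ 2) (s ^ 2) (t ^ 2) = (r + s + t) * (r - s - t) * (r + s - t) * (r - s + t) := by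
  unfold kallen
  ring

theorem IsTriangular.kallen_eq_zero {x y z : R} (h : IsTriangular x y z) : kallen x y z = 0 := by
  obtain ⟨r, s, t, rfl, rfl, rfl, hsum⟩ := h
  simp [kallen_sq, hsum]

theorem kallen_mul_left (k x y z : R) : kallen (k * x) (k * y) (k * z) = k ^ 2 * kallen x y z := by
  unfold kallen
  ring

theorem kallen_eval_quadratic {N : R → R} {a b c : R} (hN : ∀ x, N x = a * (x * x) + b * x + c)
    (p q r : R) :
    kallen (N p * (q - r) ^ 2) (N q * (r - p) ^ 2) (N r * (p - q) ^ 2) =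
      ((p - q) * (q - r) * (r - p)) ^ 2 * discrim a b c := by
  simp only [hN, kallen, discrim]
  ring

theorem discrim_of_roots (c z₁ z₂ : R) :
    discrim c (-(c * (z₁ + z₂))) (c * (z₁ * z₂)) = (c * (z₁ - z₂)) ^ 2 := by
  unfold discrim
  ring

end CommRing

section Field

variable {K : Type*} [Field K]

/-- The 2-residue at the double pole `p` of `N(z) (dz)² / ((z - p)² (z - q)² (z - r)²)`. It is only
meaningful when `p` differs from `q` and `r`; otherwise the inverses make it zero. -/
def twoResidue (N : K → K) (p q r : K) : K :=
  N p * ((p - q) ^ 2)⁻¹ * ((p - r) ^ 2)⁻¹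

theorem twoResidue_swap (N : K → K) (p q r : K) : twoResidue N p q r = twoResidue N p r q :=
  mul_right_comm _ _ _

theorem twoResidue_eq_inv_mul (N : K → K) (p : K) {q r : K} (hqr : q ≠ r) :
    twoResidue N p q r = (((p - q) * (q - r) * (r - p)) ^ 2)⁻¹ * (N p * (q - r) ^ 2) := by
  have hcancel : ((q - r) ^ 2)⁻¹ * (q - r) ^ 2 = 1 :=
    inv_mul_cancel₀ (pow_ne_zero 2 (sub_ne_zero.mpr hqr))
  rw [twoResidue, ← neg_sub r p, neg_sq, mul_pow, mul_pow, mul_inv, mul_inv]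
  linear_combination -(N p * ((p - q) ^ 2)⁻¹ * ((r - p) ^ 2)⁻¹) * hcancel

theorem kallen_twoResidue {N : K → K} {a b c : K} (hN : ∀ x, N x = a * (x * x) + b * x + c)
    {p q r : K} (hpq : p ≠ q) (hpr : p ≠ r) (hqr : q ≠ r) :
    kallen (twoResidue N p q r) (twoResidue N q p r) (twoResidue N r p q) =
      discrim a b c / ((p - q) * (q - r) * (r - p)) ^ 2 := by
  set V := (p - q) * (q - r) * (r - p) with hV
  have hV0 : V ≠ 0 := by simp [hV, sub_eq_zero, hpq, hqr, hpr.symm]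
  have hp : twoResidue N p q r = (V ^ 2)⁻¹ * (N p * (q - r) ^ 2) :=
    twoResidue_eq_inv_mul N p hqr
  have hq : twoResidue N q p r = (V ^ 2)⁻¹ * (N q * (r - p) ^ 2) := by
    rw [twoResidue_swap, twoResidue_eq_inv_mul N q hpr.symm, hV, mul_rotate (p - q)]
  have hr : twoResidue N r p q = (V ^ 2)⁻¹ * (N r * (p - q) ^ 2) := by
    rw [twoResidue_eq_inv_mul N r hpq, hV, mul_rotate (r - p)]
  rw [hp, hq, hr, kallen_mul_left, kallen_eval_quadratic hN, ← hV]
  field_simp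

theorem kallen_twoResidue_ne_zero {c z₁ z₂ p₁ p₂ p₃ : K} (hc : c ≠ 0) (hz : z₁ ≠ z₂)
    (hp12 : p₁ ≠ p₂) (hp13 : p₁ ≠ p₃) (hp23 : p₂ ≠ p₃) :
    let N : K → K := fun x ↦ c * (x - z₁) * (x - z₂)
    kallen (twoResidue N p₁ p₂ p₃) (twoResidue N p₂ p₁ p₃) (twoResidue N p₃ p₁ p₂) ≠ 0 := by
  intro N
  have hN (x : K) : N x = c * (x * x) + -(c * (z₁ + z₂)) * x + c * (z₁ * z₂) := by ring
  rw [kallen_twoResidue hN hp12 hp13 hp23, discrim_of_roots]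
  simp [sub_eq_zero, hc, hz, hp12, hp23, hp13.symm]

theorem quadratic_residues_not_triangular_general {z₁ z₂ p₁ p₂ p₃ c : K} (hz : z₁ ≠ z₂)
    (hp12 : p₁ ≠ p₂) (hp13 : p₁ ≠ p₃) (hp23 : p₂ ≠ p₃) (hc : c ≠ 0) :
    let N : K → K := fun x ↦ c * (x - z₁) * (x - z₂)
    let R₁ := twoResidue N p₁ p₂ p₃
    let R₂ := twoResidue N p₂ p₁ p₃
    let R₃ := twoResidue N p₃ p₁ p₂
    ¬ IsTriangular R₁ R₂ R₃ ∧
      R₁ ^ 2 + R₂ ^ 2 + R₃ ^ 2 ≠ 2 * (R₁ * R₂ + R₂ * R₃ + R₃ * R₁) := by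
  intro N R₁ R₂ R₃
  have hR : kallen R₁ R₂ R₃ ≠ 0 := kallen_twoResidue_ne_zero hc hz hp12 hp13 hp23
  exact ⟨fun h ↦ hR h.kallen_eq_zero, sub_ne_zero.mp hR⟩

end Field

/-- Let `z₁ ≠ z₂` and `p₁, p₂, p₃` be five pairwise distinct complex numbers and `c ∈ ℂ*`.
The quadratic residues `R_i = c (p_i - z₁)(p_i - z₂) ∏_{j ≠ i} (p_i - p_j)^{-2}` of the
quadratic differential `c (z-z₁)(z-z₂) ∏ (z-p_i)^{-2} (dz)²` at its three double poles are
never triangular: no choice of square roots `rᵢ` of the `Rᵢ` satisfies `r₁ + r₂ + r₃ = 0`.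
Equivalently `R₁² + R₂² + R₃² ≠ 2(R₁R₂ + R₂R₃ + R₃R₁)`. -/
theorem quadratic_residues_not_triangular (z₁ z₂ p₁ p₂ p₃ : ℂ)
    (hz : z₁ ≠ z₂)
    (hz1p1 : z₁ ≠ p₁) (hz1p2 : z₁ ≠ p₂) (hz1p3 : z₁ ≠ p₃)
    (hz2p1 : z₂ ≠ p₁) (hz2p2 : z₂ ≠ p₂) (hz2p3 : z₂ ≠ p₃)
    (hp12 : p₁ ≠ p₂) (hp13 : p₁ ≠ p₃) (hp23 : p₂ ≠ p₃)
    (c : ℂ) (hc : c ≠ 0) :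
    (¬ ∃ r₁ r₂ r₃ : ℂ,
        r₁ ^ 2 = c * (p₁ - z₁) * (p₁ - z₂) * ((p₁ - p₂) ^ 2)⁻¹ * ((p₁ - p₃) ^ 2)⁻¹ ∧
        r₂ ^ 2 = c * (p₂ - z₁) * (p₂ - z₂) * ((p₂ - p₁) ^ 2)⁻¹ * ((p₂ - p₃) ^ 2)⁻¹ ∧
        r₃ ^ 2 = c * (p₃ - z₁) * (p₃ - z₂) * ((p₃ - p₁) ^ 2)⁻¹ * ((p₃ - p₂) ^ 2)⁻¹ ∧
        r₁ + r₂ + r₃ = 0) ∧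
    (c * (p₁ - z₁) * (p₁ - z₂) * ((p₁ - p₂) ^ 2)⁻¹ * ((p₁ - p₃) ^ 2)⁻¹) ^ 2 +
        (c * (p₂ - z₁) * (p₂ - z₂) * ((p₂ - p₁) ^ 2)⁻¹ * ((p₂ - p₃) ^ 2)⁻¹) ^ 2 +
        (c * (p₃ - z₁) * (p₃ - z₂) * ((p₃ - p₁) ^ 2)⁻¹ * ((p₃ - p₂) ^ 2)⁻¹) ^ 2 ≠
      2 * ((c * (p₁ - z₁) * (p₁ - z₂) * ((p₁ - p₂) ^ 2)⁻¹ * ((p₁ - p₃) ^ 2)⁻¹) *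
            (c * (p₂ - z₁) * (p₂ - z₂) * ((p₂ - p₁) ^ 2)⁻¹ * ((p₂ - p₃) ^ 2)⁻¹) +
          (c * (p₂ - z₁) * (p₂ - z₂) * ((p₂ - p₁) ^ 2)⁻¹ * ((p₂ - p₃) ^ 2)⁻¹) *
            (c * (p₃ - z₁) * (p₃ - z₂) * ((p₃ - p₁) ^ 2)⁻¹ * ((p₃ - p₂) ^ 2)⁻¹) +
          (c * (p₃ - z₁) * (p₃ - z₂) * ((p₃ - p₁) ^ 2)⁻¹ * ((p₃ - p₂) ^ 2)⁻¹) *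
            (c * (p₁ - z₁) * (p₁ - z₂) * ((p₁ - p₂) ^ 2)⁻¹ * ((p₁ - p₃) ^ 2)⁻¹)) := by
  exact quadratic_residues_not_triangular_general hz hp12 hp13 hp23 hc
end

section
/- Let x₁, …, x_a and y₁, …, y_b be strictly positive integers with gcd(x₁,…,x_a,y₁,…,y_b) = 1 and ∑_{i=1}^{a} x_i = ∑_{j=1}^{b} y_j. If there is no connection graph with the x_i as weights on one side and the y_j as weights on the other, then ∑_{i=1}^{a} x_i ≤ a·b/2. -/
/-- One step of the leaf-removal operation on a weighted graph state.  A state is a pair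
`(s, w)` of the set of remaining vertices and the current weight function.  A step removes a
leaf `v` of the graph induced on `s` (a vertex with a unique neighbour `u` in `s`) and
subtracts the weight of `v` from that of `u`. -/
def LeafStep {V : Type} [DecidableEq V] (G : SimpleGraph V) :
    Finset V × (V → ℝ) → Finset V × (V → ℝ) → Prop := fun st st' =>
  ∃ v ∈ st.1, ∃ u ∈ st.1, u ≠ v ∧ G.Adj v u ∧ (∀ x ∈ st.1, G.Adj v x → x = u) ∧
    st'.1 = st.1.erase v ∧ st'.2 = Function.update st.2 u (st.2 u - st.2 v)

/-- `ReachN G n st st'` : the state `st'` is obtained from `st` by exactly `n` leaf-removal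
steps. -/
def ReachN {V : Type} [DecidableEq V] (G : SimpleGraph V) :
    ℕ → Finset V × (V → ℝ) → Finset V × (V → ℝ) → Prop
  | 0, st, st' => st' = st
  | n + 1, st, st' => ∃ m, LeafStep G st m ∧ ReachN G n m st'

/-- A connection graph with weights `x : Fin a → ℝ` on the positive side and
`y : Fin b → ℝ` on the negative side: a bipartite tree on `Fin a ⊕ Fin b` with strictly
positive weights whose two sides have equal total weight, and such that applying between `1`
and (#edges − 1) = `a + b - 2` leaf-removal steps always leaves all remaining weights
strictly positive. -/
def IsConnectionGraph {a b : ℕ} (G : SimpleGraph (Fin a ⊕ Fin b))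
    (x : Fin a → ℝ) (y : Fin b → ℝ) : Prop :=
  G.IsTree ∧
  (∀ i j, ¬ G.Adj (Sum.inl i) (Sum.inl j)) ∧
  (∀ i j, ¬ G.Adj (Sum.inr i) (Sum.inr j)) ∧
  (∀ i, 0 < x i) ∧ (∀ j, 0 < y j) ∧
  (∑ i, x i = ∑ j, y j) ∧
  (∀ n : ℕ, 1 ≤ n → n ≤ a + b - 2 →
    ∀ st, ReachN G n (Finset.univ, Sum.elim x y) st → ∀ v ∈ st.1, 0 < st.2 v)

/-!
Realize the marginals `x`, `y` by a transport plan supported on a forest, and take such a plan with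
as many edges as possible. If `ij` and `i'j'` are edges in different components and `ij` has the
smaller weight `m`, then rerouting `m` (replace `ij` by `ij'` and `i'j`, and lower the weight of
`i'j'` by `m`) gives a forest plan with one more edge. So, unless the maximal forest is a tree, all
its edges have the same weight `c`; then `x` and `y` are the degrees times `c`, and counting the at
most `a + b - 2` edges of a disconnected forest bounds their sum.

If the maximal forest is a tree, it is a connection graph: removing leaves preserves the property
that the weight of a vertex is the total weight of its remaining edges, so weights stay positive as
long as two vertices remain.
-/

open Finset SimpleGraph

section Graph

variable {V : Type*} {G : SimpleGraph V} {i j i' j' u v : V}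

theorem not_reachable_of_isIsolated (hu : G.IsIsolated u) (huv : u ≠ v) : ¬ G.Reachable u v :=
  fun h => G.mem_support_iff_not_isIsolated.mp (mem_support_of_reachable huv h) hu

theorem preconnected_induce_sdiff_singleton {s : Set V} (hs : (G.induce s).Preconnected)
    (hv : (G.neighborSet v ∩ s).Subsingleton) : (G.induce (s \ {v})).Preconnected := by
  have h : ((G.induce s).induce {p | p.1 ≠ v}).Preconnected := by
    refine hs.induce_of_degree_eq_one fun p hp => ?_
    obtain rfl : p.1 = v := by simpa using hp
    exact fun q hq r hr => Subtype.ext (hv ⟨hq, q.2⟩ ⟨hr, r.2⟩)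
  let f : (G.induce s).induce {p | p.1 ≠ v} →g G.induce (s \ {v}) :=
    ⟨fun p => ⟨p, p.1.2, p.2⟩, fun hadj => hadj⟩
  exact h.map f fun p => ⟨⟨⟨p, p.2.1⟩, p.2.2⟩, rfl⟩

theorem ncard_edgeSet_sup_edge [Finite V] (hne : u ≠ v) (hadj : ¬ G.Adj u v) :
    (G ⊔ edge u v).edgeSet.ncard = G.edgeSet.ncard + 1 := by
  rw [edgeSet_sup, edgeSet_edge_of_ne hne, Set.union_singleton,
    Set.ncard_insert_of_notMem (by simpa using hadj)]

theorem ncard_edgeSet_lt_card_of_isAcyclic [Finite V] [Nonempty V] (hG : G.IsAcyclic) :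
    G.edgeSet.ncard < Nat.card V := by
  classical
  have := Fintype.ofFinite V
  obtain ⟨T, hGT, -, hT⟩ := connected_top.exists_isTree_le_of_le_of_isAcyclic le_top hG
  have hcard := hT.card_edgeFinset
  rw [← Set.ncard_coe_finset, coe_edgeFinset] at hcard
  have hle := Set.ncard_le_ncard (edgeSet_mono hGT)
  rw [Nat.card_eq_fintype_card]
  omega

theorem ncard_edgeSet_add_two_le_of_isAcyclic [Finite V] (hG : G.IsAcyclic)
    (hconn : ¬ G.Preconnected) : G.edgeSet.ncard + 2 ≤ Nat.card V := by
  simp only [Preconnected, not_forall] at hconn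
  obtain ⟨u, v, huv⟩ := hconn
  have hne : u ≠ v := by rintro rfl; exact huv .rfl
  have : Nonempty V := ⟨u⟩
  have hlt := ncard_edgeSet_lt_card_of_isAcyclic (hG.sup_edge_of_not_reachable huv)
  rw [ncard_edgeSet_sup_edge hne (mt Adj.reachable huv)] at hlt
  omega

/-- The graph `G` with the edge `ij` replaced by `ij'` and `i'j`. When `ij` and `i'j'` are edges in
different components of a forest, this joins the two components and keeps the edge `i'j'`. -/
def relink (G : SimpleGraph V) (i j i' j' : V) : SimpleGraph V :=
  (G ⊔ edge i j').deleteEdges {s(i, j)} ⊔ edge i' j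

theorem relink_le {K : SimpleGraph V} (hG : G ≤ K) (hij' : K.Adj i j') (hi'j : K.Adj i' j) :
    relink G i j i' j' ≤ K :=
  sup_le ((deleteEdges_le _).trans (sup_le hG (edge_le_iff _ |>.mpr (.inr hij'))))
    (edge_le_iff _ |>.mpr (.inr hi'j))

theorem isAcyclic_sup_edge_of_adj (hG : G.IsAcyclic) (hij' : G.Adj i' j')
    (hr : ¬ G.Reachable i i') : (G ⊔ edge i j').IsAcyclic :=
  hG.sup_edge_of_not_reachable fun h => hr (h.trans hij'.symm.reachable)

/-- After adding `ij'`, the deleted edge `ij` is a bridge, and `i'` lies on the side of `i`. -/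
theorem not_reachable_deleteEdges_sup_edge (hG : G.IsAcyclic) (hij : G.Adj i j)
    (hi'j' : G.Adj i' j') (hr : ¬ G.Reachable i i') :
    ¬ ((G ⊔ edge i j').deleteEdges {s(i, j)}).Reachable i' j := by
  have hbridge : (G ⊔ edge i j').IsBridge s(i, j) :=
    isAcyclic_iff_forall_adj_isBridge.mp (isAcyclic_sup_edge_of_adj hG hi'j' hr) (.inl hij)
  have hii' : i ≠ i' := by rintro rfl; exact hr .rfl
  have hij' : i ≠ j' := by rintro rfl; exact hr hi'j'.symm.reachable
  have hjj' : j ≠ j' := by rintro rfl; exact hr (hij.reachable.trans hi'j'.symm.reachable)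
  have hadj₁ : ((G ⊔ edge i j').deleteEdges {s(i, j)}).Adj i j' := by
    grind [deleteEdges_adj]
  have hadj₂ : ((G ⊔ edge i j').deleteEdges {s(i, j)}).Adj i' j' := by
    grind [deleteEdges_adj]
  exact fun h => isBridge_iff.mp hbridge (hadj₁.reachable.trans (hadj₂.symm.reachable.trans h))

theorem isAcyclic_relink (hG : G.IsAcyclic) (hij : G.Adj i j) (hi'j' : G.Adj i' j')
    (hr : ¬ G.Reachable i i') : (relink G i j i' j').IsAcyclic :=
  IsAcyclic.sup_edge_of_not_reachable (not_reachable_deleteEdges_sup_edge hG hij hi'j' hr)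
    ((isAcyclic_sup_edge_of_adj hG hi'j' hr).anti (deleteEdges_le _))

theorem ncard_edgeSet_relink [Finite V] (hG : G.IsAcyclic) (hij : G.Adj i j) (hi'j' : G.Adj i' j')
    (hr : ¬ G.Reachable i i') :
    (relink G i j i' j').edgeSet.ncard = G.edgeSet.ncard + 1 := by
  have hij' : ¬ G.Reachable i j' := fun h => hr (h.trans hi'j'.symm.reachable)
  have hi'j := not_reachable_deleteEdges_sup_edge hG hij hi'j' hr
  have hdel : s(i, j) ∈ (G ⊔ edge i j').edgeSet := Or.inl hij
  rw [relink, ncard_edgeSet_sup_edge (by rintro rfl; exact hi'j .rfl) (mt Adj.reachable hi'j),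
    edgeSet_deleteEdges, Set.ncard_sdiff_singleton_add_one hdel,
    ncard_edgeSet_sup_edge (by rintro rfl; exact hij' .rfl) (mt Adj.reachable hij')]

theorem exists_edgeSet_forall_eq_of_not_preconnected {X : Type*} {W : Sym2 V → X}
    (hG : ¬ G.Preconnected) (hadj : ∀ v, ∃ u, G.Adj v u)
    (hW : ∀ u v u' v', G.Adj u v → G.Adj u' v' → ¬ G.Reachable u u' → W s(u, v) = W s(u', v')) :
    ∃ e₀ ∈ G.edgeSet, ∀ e ∈ G.edgeSet, W e = W e₀ := by
  simp only [Preconnected, not_forall] at hG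
  obtain ⟨u, v, huv⟩ := hG
  obtain ⟨u', hu⟩ := hadj u
  obtain ⟨v', hv⟩ := hadj v
  refine ⟨s(u, u'), hu, Sym2.ind fun p q hpq => ?_⟩
  by_cases hp : G.Reachable p u
  · rw [hW u u' v v' hu hv huv]
    exact hW p q v v' hpq hv fun h => huv (hp.symm.trans h)
  · exact hW p q u u' hpq hu hp

end Graph

section EdgeWeighting

variable {V R : Type*} {i j i' j' : V}

theorem sum_single_sym2 [Fintype V] [DecidableEq V] [AddCommMonoid R] (hij : i ≠ j) (m : R)
    (v : V) : ∑ u, (Pi.single s(i, j) m : Sym2 V → R) s(v, u) =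
      (Pi.single i m + Pi.single j m : V → R) v := by
  simp only [Pi.single_apply, Pi.add_apply, Sym2.eq_iff]
  rcases eq_or_ne v i with rfl | hi
  · simp [hij]
  · simp [hi, ite_and]

variable [Fintype V] [AddCommGroup R] [LinearOrder R]

/-- `W` assigns a weight to every pair of vertices, positive exactly on the edges of `G`, and `z v`
is the total weight of the edges at `v`. -/
structure IsEdgeWeighting (G : SimpleGraph V) (W : Sym2 V → R) (z : V → R) : Prop where
  pos : ∀ e ∈ G.edgeSet, 0 < W e
  eq_zero : ∀ e ∉ G.edgeSet, W e = 0
  sum_eq : ∀ v, ∑ u, W s(v, u) = z v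

namespace IsEdgeWeighting

variable {G : SimpleGraph V} {W : Sym2 V → R} {z : V → R} {m : R}

theorem nonneg (hW : IsEdgeWeighting G W z) (e : Sym2 V) : 0 ≤ W e := by
  by_cases he : e ∈ G.edgeSet
  · exact (hW.pos e he).le
  · exact (hW.eq_zero e he).ge

theorem isIsolated_iff [IsOrderedAddMonoid R] (hW : IsEdgeWeighting G W z) (v : V) :
    G.IsIsolated v ↔ z v = 0 := by
  rw [← hW.sum_eq, sum_eq_zero_iff_of_nonneg fun u _ => hW.nonneg _]
  exact forall_congr' fun u =>
    ⟨fun h _ => hW.eq_zero _ h, fun h hadj => (hW.pos _ hadj).ne' (h (mem_univ u))⟩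

theorem eq_degree_nsmul [DecidableRel G.Adj] {c : R} (hW : IsEdgeWeighting G W z)
    (hc : ∀ e ∈ G.edgeSet, W e = c) (v : V) : z v = G.degree v • c := by
  rw [← hW.sum_eq, ← card_neighborFinset_eq_degree, ← sum_const,
    ← sum_subset (subset_univ (G.neighborFinset v))]
  · exact sum_congr rfl fun u hu => hc _ (by simpa using hu)
  · exact fun u _ hu => hW.eq_zero _ (by simpa using hu)

theorem sup_edge [DecidableEq V] [IsOrderedAddMonoid R] (hW : IsEdgeWeighting G W z)
    (hij : i ≠ j) (hm : 0 < m) :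
    IsEdgeWeighting (G ⊔ edge i j) (W + Pi.single s(i, j) m)
      (z + (Pi.single i m + Pi.single j m)) where
  pos e he := by
    rcases eq_or_ne e s(i, j) with rfl | hne
    · simpa using add_pos_of_nonneg_of_pos (hW.nonneg _) hm
    · simp only [edgeSet_sup, edgeSet_edge_of_ne hij, Set.union_singleton, Set.mem_insert_iff,
        hne, false_or] at he
      simpa [hne] using hW.pos e he
  eq_zero e he := by
    simp only [edgeSet_sup, edgeSet_edge_of_ne hij, Set.union_singleton, Set.mem_insert_iff,
      not_or] at he
    simpa [he.1] using hW.eq_zero e he.2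
  sum_eq v := by simp [sum_add_distrib, hW.sum_eq, sum_single_sym2 hij]

theorem deleteEdge [DecidableEq V] (hW : IsEdgeWeighting G W z) (hadj : G.Adj i j)
    (hm : W s(i, j) = m) :
    IsEdgeWeighting (G.deleteEdges {s(i, j)}) (W - Pi.single s(i, j) m)
      (z - (Pi.single i m + Pi.single j m)) where
  pos e he := by
    rw [edgeSet_deleteEdges] at he
    have hne : e ≠ s(i, j) := he.2
    simpa [hne] using hW.pos e he.1
  eq_zero e he := by
    rw [edgeSet_deleteEdges] at he
    rcases eq_or_ne e s(i, j) with rfl | hne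
    · simp [hm]
    · simpa [hne] using hW.eq_zero e fun h => he ⟨h, hne⟩
  sum_eq v := by simp [hW.sum_eq, sum_single_sym2 hadj.ne]

theorem sub_single [DecidableEq V] [IsOrderedAddMonoid R] (hW : IsEdgeWeighting G W z)
    (hadj : G.Adj i j) (hm : m < W s(i, j)) :
    IsEdgeWeighting G (W - Pi.single s(i, j) m) (z - (Pi.single i m + Pi.single j m)) where
  pos e he := by
    rcases eq_or_ne e s(i, j) with rfl | hne
    · simpa using hm
    · simpa [hne] using hW.pos e he
  eq_zero e he := by
    have hne : e ≠ s(i, j) := by rintro rfl; exact he hadj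
    simpa [hne] using hW.eq_zero e he
  sum_eq v := by simp [hW.sum_eq, sum_single_sym2 hadj.ne]

theorem exists_relink [IsOrderedAddMonoid R] (hW : IsEdgeWeighting G W z)
    (hij : G.Adj i j) (hi'j' : G.Adj i' j') (hr : ¬ G.Reachable i i')
    (hlt : W s(i, j) < W s(i', j')) : ∃ W', IsEdgeWeighting (relink G i j i' j') W' z := by
  classical
  have hii' : i ≠ i' := by rintro rfl; exact hr .rfl
  have hij' : i ≠ j' := by rintro rfl; exact hr hi'j'.symm.reachable
  have hi'j : i' ≠ j := by rintro rfl; exact hr hij.reachable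
  have hjj' : j ≠ j' := by rintro rfl; exact hr (hij.reachable.trans hi'j'.symm.reachable)
  have hm : 0 < W s(i, j) := hW.pos _ hij
  have hW₁ := (hW.sub_single hi'j' hlt).sup_edge hij' hm
  have hij_weight : (W - Pi.single s(i', j') (W s(i, j)) + Pi.single s(i, j') (W s(i, j)) :
      Sym2 V → R) s(i, j) = W s(i, j) := by
    simp [hii', hij', hjj']
  have hW₂ := (hW₁.deleteEdge (.inl hij) hij_weight).sup_edge hi'j hm
  exact ⟨_, by convert! hW₂ using 1; abel⟩

end IsEdgeWeighting

end EdgeWeighting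

section TransportForest

variable {α β R : Type*} {u v u' v' : α ⊕ β}

theorem completeBipartiteGraph_adj_cross (h : (completeBipartiteGraph α β).Adj u v)
    (h' : (completeBipartiteGraph α β).Adj u' v') :
    (completeBipartiteGraph α β).Adj u v' ∧ (completeBipartiteGraph α β).Adj u' v ∨
      (completeBipartiteGraph α β).Adj u u' ∧ (completeBipartiteGraph α β).Adj v' v := by
  rcases u with u | u <;> rcases u' with u' | u' <;> simp_all

variable [Fintype α] [Fintype β] [AddCommGroup R] [LinearOrder R]

/-- The forests between the two sides that carry positive edge weights with prescribed marginals
`z`, that is, the cycle-free supports of transport plans from `z ∘ Sum.inl` to `z ∘ Sum.inr`. -/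
structure IsTransportForest (z : α ⊕ β → R) (G : SimpleGraph (α ⊕ β)) : Prop where
  le_completeBipartiteGraph : G ≤ completeBipartiteGraph α β
  isAcyclic : G.IsAcyclic
  exists_isEdgeWeighting : ∃ W, IsEdgeWeighting G W z

variable {G : SimpleGraph (α ⊕ β)} {W : Sym2 (α ⊕ β) → R} {z : α ⊕ β → R}

theorem isTransportForest_bot : IsTransportForest (0 : α ⊕ β → R) ⊥ :=
  ⟨bot_le, isAcyclic_bot, 0, by simp, by simp, by simp⟩

variable [IsOrderedAddMonoid R]

theorem IsTransportForest.sup_edge [DecidableEq α] [DecidableEq β] {i : α} {j : β} {m : R}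
    (hG : IsTransportForest z G) (hm : 0 < m) (hz : z (.inl i) = 0 ∨ z (.inr j) = 0) :
    IsTransportForest (z + (Pi.single (.inl i) m + Pi.single (.inr j) m))
      (G ⊔ edge (.inl i) (.inr j)) := by
  obtain ⟨W, hW⟩ := hG.exists_isEdgeWeighting
  refine ⟨sup_le hG.le_completeBipartiteGraph ?_, hG.isAcyclic.sup_edge_of_not_reachable ?_, _,
    hW.sup_edge Sum.inl_ne_inr hm⟩
  · exact edge_le_iff _ |>.mpr (.inr (by simp))
  · rw [← hW.isIsolated_iff, ← hW.isIsolated_iff] at hz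
    rcases hz with hi | hj
    · exact not_reachable_of_isIsolated hi Sum.inl_ne_inr
    · exact fun h => not_reachable_of_isIsolated hj Sum.inr_ne_inl h.symm

theorem exists_pos_of_sum_eq (hz : 0 ≤ z) (hsum : ∑ i, z (.inl i) = ∑ j, z (.inr j))
    (hne : z ≠ 0) : ∃ i j, 0 < z (.inl i) ∧ 0 < z (.inr j) := by
  by_contra! h
  have hside : (∀ i, z (.inl i) = 0) ∨ ∀ j, z (.inr j) = 0 := by
    by_contra! ⟨⟨i, hi⟩, j, hj⟩
    exact (h i j ((hz _).lt_of_ne' hi)).not_gt ((hz _).lt_of_ne' hj)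
  have hl := sum_eq_zero_iff_of_nonneg (s := univ) fun i _ => hz (.inl i)
  have hr := sum_eq_zero_iff_of_nonneg (s := univ) fun j _ => hz (.inr j)
  rw [hsum] at hl
  apply hne
  ext (i | j) <;> simp_all

/-- The greedy step of transport: ship as much as possible from one supplier to one consumer. -/
theorem exists_eq_add_single_add_single [DecidableEq α] [DecidableEq β] (hz : 0 ≤ z)
    (hsum : ∑ i, z (.inl i) = ∑ j, z (.inr j)) (hne : z ≠ 0) :
    ∃ z' i j, ∃ m > 0, z = z' + (Pi.single (.inl i) m + Pi.single (.inr j) m) ∧ 0 ≤ z' ∧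
      ∑ i, z' (.inl i) = ∑ j, z' (.inr j) ∧ (z' (.inl i) = 0 ∨ z' (.inr j) = 0) ∧
      Function.support z' ⊂ Function.support z := by
  obtain ⟨i, j, hi, hj⟩ := exists_pos_of_sum_eq hz hsum hne
  set m := min (z (.inl i)) (z (.inr j)) with hm
  set z' := z - (Pi.single (.inl i) m + Pi.single (.inr j) m) with hz'
  have hi' : z' (.inl i) = z (.inl i) - m := by simp [hz']
  have hj' : z' (.inr j) = z (.inr j) - m := by simp [hz']
  have heq (v) (hvi : v ≠ .inl i) (hvj : v ≠ .inr j) : z' v = z v := by simp [hz', hvi, hvj]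
  have hzero : z' (.inl i) = 0 ∨ z' (.inr j) = 0 := by
    rw [hi', hj', sub_eq_zero, sub_eq_zero]
    exact (min_choice _ _).imp Eq.symm Eq.symm
  have hnonneg : 0 ≤ z' := fun v => by
    by_cases hv : v = .inl i ∨ v = .inr j
    · rcases hv with rfl | rfl <;> simp [hi', hj', hm]
    · push Not at hv
      simpa [heq v hv.1 hv.2] using hz v
  have hsupp : Function.support z' ⊆ Function.support z := fun v hv hv₀ =>
    hv ((heq v (by grind) (by grind)).trans hv₀)
  refine ⟨z', i, j, m, lt_min hi hj, (sub_add_cancel _ _).symm, hnonneg, ?_, hzero, ?_⟩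
  · simp [hz', Pi.single_apply, hsum]
  · rcases hzero with h | h
    · exact ⟨hsupp, fun hsub => hsub hi.ne' h⟩
    · exact ⟨hsupp, fun hsub => hsub hj.ne' h⟩

theorem exists_isTransportForest (hz : 0 ≤ z) (hsum : ∑ i, z (.inl i) = ∑ j, z (.inr j)) :
    ∃ G, IsTransportForest z G := by
  classical
  induction hn : (Function.support z).ncard using Nat.strong_induction_on generalizing z with
  | _ n ih =>
  obtain rfl | hne := eq_or_ne z 0
  · exact ⟨⊥, isTransportForest_bot⟩
  obtain ⟨z', i, j, m, hm, rfl, hz', hsum', hzero, hsupp⟩ :=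
    exists_eq_add_single_add_single hz hsum hne
  obtain ⟨G, hG⟩ := ih _ (hn ▸ Set.ncard_lt_ncard hsupp) hz' hsum' rfl
  exact ⟨_, hG.sup_edge hm hzero⟩

theorem IsTransportForest.relink (hG : IsTransportForest z G) (hW : IsEdgeWeighting G W z)
    (huv : G.Adj u v) (huv' : G.Adj u' v') (hr : ¬ G.Reachable u u')
    (hlt : W s(u, v) < W s(u', v')) (hcross : (completeBipartiteGraph α β).Adj u v')
    (hcross' : (completeBipartiteGraph α β).Adj u' v) :
    IsTransportForest z (relink G u v u' v') :=
  ⟨relink_le hG.le_completeBipartiteGraph hcross hcross', isAcyclic_relink hG.isAcyclic huv huv' hr,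
    hW.exists_relink huv huv' hr hlt⟩

theorem edgeWeight_le_of_maximalFor (hW : IsEdgeWeighting G W z)
    (hG : MaximalFor (IsTransportForest z) (fun G => G.edgeSet.ncard) G) (huv : G.Adj u v)
    (huv' : G.Adj u' v') (hr : ¬ G.Reachable u u') : W s(u', v') ≤ W s(u, v) := by
  by_contra! hlt
  wlog hcross : (completeBipartiteGraph α β).Adj u v' ∧ (completeBipartiteGraph α β).Adj u' v
    generalizing u' v'
  · have hswap := (completeBipartiteGraph_adj_cross (hG.prop.le_completeBipartiteGraph huv)
      (hG.prop.le_completeBipartiteGraph huv')).resolve_left hcross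
    exact this huv'.symm (fun h => hr (h.trans huv'.symm.reachable))
      (by rwa [Sym2.eq_swap (a := v')]) hswap
  have hcard := ncard_edgeSet_relink hG.prop.isAcyclic huv huv' hr
  have hle := hG.not_gt (hG.prop.relink hW huv huv' hr hlt hcross.1 hcross.2)
  simp [hcard] at hle

theorem exists_nsmul_eq_of_maximalFor
    (hG : MaximalFor (IsTransportForest z) (fun G => G.edgeSet.ncard) G) (hconn : ¬ G.Preconnected)
    (hz : ∀ v, z v ≠ 0) :
    ∃ c > 0, ∃ n : α ⊕ β → ℕ, (∀ v, z v = n v • c) ∧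
      ∑ v, n v + 4 ≤ 2 * (Nat.card α + Nat.card β) := by
  classical
  obtain ⟨W, hW⟩ := hG.prop.exists_isEdgeWeighting
  have hadj (v) : ∃ u, G.Adj v u := by
    by_contra! hv
    exact hz v ((hW.isIsolated_iff v).mp hv)
  obtain ⟨e, he, hconst⟩ := exists_edgeSet_forall_eq_of_not_preconnected hconn hadj
    fun u v u' v' huv huv' hr =>
      (edgeWeight_le_of_maximalFor hW hG huv' huv (mt .symm hr)).antisymm
        (edgeWeight_le_of_maximalFor hW hG huv huv' hr)
  refine ⟨W e, hW.pos e he, (G.degree ·), hW.eq_degree_nsmul hconst, ?_⟩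
  have hcard := ncard_edgeSet_add_two_le_of_isAcyclic hG.prop.isAcyclic hconn
  rw [Nat.card_sum, ← coe_edgeFinset, Set.ncard_coe_finset] at hcard
  rw [sum_degrees_eq_twice_card_edges]
  omega

theorem exists_isTree_or_exists_nsmul_eq [Nonempty α] (hz : ∀ v, 0 < z v)
    (hsum : ∑ i, z (.inl i) = ∑ j, z (.inr j)) :
    (∃ G, IsTransportForest z G ∧ G.IsTree) ∨
      ∃ c > 0, ∃ n : α ⊕ β → ℕ, (∀ v, z v = n v • c) ∧
        ∑ v, n v + 4 ≤ 2 * (Nat.card α + Nat.card β) := by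
  obtain ⟨G, hG⟩ := Set.Finite.exists_maximalFor (·.edgeSet.ncard) {G | IsTransportForest z G}
    (Set.toFinite _) (exists_isTransportForest (fun v => (hz v).le) hsum)
  by_cases hconn : G.Preconnected
  · exact .inl ⟨G, hG.prop, ⟨hconn⟩, hG.prop.isAcyclic⟩
  · exact .inr (exists_nsmul_eq_of_maximalFor hG hconn fun v => (hz v).ne')

end TransportForest

section LeafRemoval

variable {V : Type} {G : SimpleGraph V} {W : Sym2 V → ℝ} {z : V → ℝ} {st st' : Finset V × (V → ℝ)}

/-- The invariant of leaf removal: the remaining vertices induce a connected graph, and the current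
weight of a vertex is the total weight `W` of its edges to remaining vertices. -/
structure IsInducedState (G : SimpleGraph V) (W : Sym2 V → ℝ) (st : Finset V × (V → ℝ)) :
    Prop where
  preconnected : (G.induce (st.1 : Set V)).Preconnected
  weight_eq : ∀ v ∈ st.1, st.2 v = ∑ u ∈ st.1, W s(v, u)

variable [Fintype V]

theorem isInducedState_univ (hG : G.Preconnected) (hW : IsEdgeWeighting G W z) :
    IsInducedState G W (univ, z) where
  preconnected := by
    rw [coe_univ]
    exact (induceUnivIso G).symm.preconnected_iff.mp hG
  weight_eq v _ := (hW.sum_eq v).symm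

namespace IsInducedState

theorem weight_pos (hst : IsInducedState G W st) (hW : IsEdgeWeighting G W z)
    (hcard : 2 ≤ #st.1) {v : V} (hv : v ∈ st.1) : 0 < st.2 v := by
  have : Nontrivial (st.1 : Set V) :=
    Set.nontrivial_coe_sort.mpr (Finset.one_lt_card_iff_nontrivial.mp hcard)
  obtain ⟨⟨u, hu⟩, hvu⟩ := hst.preconnected.exists_adj_of_nontrivial ⟨v, hv⟩
  rw [hst.weight_eq v hv]
  exact sum_pos' (fun u _ => hW.nonneg _) ⟨u, hu, hW.pos _ hvu⟩

variable [DecidableEq V]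

theorem leafStep (hst : IsInducedState G W st) (hW : IsEdgeWeighting G W z)
    (hstep : LeafStep G st st') : IsInducedState G W st' := by
  obtain ⟨s, w⟩ := st
  obtain ⟨s', w'⟩ := st'
  obtain ⟨v, hv, u, hu, huv, hadj, hleaf, rfl : s' = _, rfl : w' = _⟩ := hstep
  have hzero (x) (hx : x ∈ s) (hxu : x ≠ u) : W s(v, x) = 0 :=
    hW.eq_zero _ fun h => hxu (hleaf x hx h)
  refine ⟨?_, fun x hx => ?_⟩
  · rw [coe_erase]
    refine preconnected_induce_sdiff_singleton hst.preconnected fun x hx y hy => ?_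
    rw [hleaf x hx.2 hx.1, hleaf y hy.2 hy.1]
  · have hxs : x ∈ s := mem_of_mem_erase hx
    have hweight_x : w x = W s(v, x) + ∑ y ∈ s.erase v, W s(x, y) := by
      rw [Sym2.eq_swap, add_sum_erase s (fun y => W s(x, y)) hv]
      exact hst.weight_eq x hxs
    rcases eq_or_ne x u with rfl | hxu
    · have hweight_v : w v = W s(v, x) :=
        (hst.weight_eq v hv).trans (sum_eq_single_of_mem x hxs hzero)
      simp [hweight_x, hweight_v]
    · simp [hweight_x, hxu, hzero x hxs hxu]

theorem weight_pos_of_reachN (hst : IsInducedState G W st) (hW : IsEdgeWeighting G W z)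
    {n : ℕ} (hn : n + 2 ≤ #st.1) (hreach : ReachN G n st st') {v : V} (hv : v ∈ st'.1) :
    0 < st'.2 v := by
  induction n generalizing st with
  | zero =>
    obtain rfl : st' = st := hreach
    exact hst.weight_pos hW (by omega) hv
  | succ n ih =>
    obtain ⟨st₁, hstep, hreach₁⟩ := hreach
    have hcard : #st₁.1 + 1 = #st.1 := by
      obtain ⟨v, hv, u, -, -, -, -, h, -⟩ := hstep
      rw [h, card_erase_add_one hv]
    exact ih (hst.leafStep hW hstep) (by omega) hreach₁

end IsInducedState

theorem IsTransportForest.isConnectionGraph {a b : ℕ} {G : SimpleGraph (Fin a ⊕ Fin b)}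
    {x : Fin a → ℝ} {y : Fin b → ℝ} (hG : IsTransportForest (Sum.elim x y) G) (htree : G.IsTree)
    (hx : ∀ i, 0 < x i) (hy : ∀ j, 0 < y j) (hsum : ∑ i, x i = ∑ j, y j) :
    IsConnectionGraph G x y := by
  obtain ⟨W, hW⟩ := hG.exists_isEdgeWeighting
  refine ⟨htree, fun i j h => ?_, fun i j h => ?_, hx, hy, hsum, fun n hn hn' st hst v hv => ?_⟩
  · simpa using hG.le_completeBipartiteGraph h
  · simpa using hG.le_completeBipartiteGraph h
  · refine (isInducedState_univ htree.preconnected hW).weight_pos_of_reachN hW ?_ hst hv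
    simp only [card_univ, Fintype.card_sum, Fintype.card_fin]
    omega

end LeafRemoval

section Integrality

theorem two_mul_sum_le_card_mul_card {ι κ : Type*} [Fintype ι] [Fintype κ] {m : ι → ℕ} {n : κ → ℕ}
    (hm : ∀ i, 0 < m i) (hn : ∀ j, 0 < n j) (hsum : ∑ i, m i = ∑ j, n j)
    (hle : ∑ i, m i + 2 ≤ Fintype.card ι + Fintype.card κ) :
    2 * ∑ i, m i ≤ Fintype.card ι * Fintype.card κ := by
  have hι : Fintype.card ι ≤ ∑ i, m i := by
    simpa using card_nsmul_le_sum univ m 1 fun i _ => hm i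
  have hκ : Fintype.card κ ≤ ∑ i, m i := by
    simpa [hsum] using card_nsmul_le_sum univ n 1 fun j _ => hn j
  obtain ⟨p, hp⟩ := Nat.exists_eq_add_of_le (show 2 ≤ Fintype.card ι by omega)
  obtain ⟨q, hq⟩ := Nat.exists_eq_add_of_le (show 2 ≤ Fintype.card κ by omega)
  calc 2 * ∑ i, m i ≤ 4 + 2 * p + 2 * q := by omega
    _ ≤ 4 + 2 * p + 2 * q + p * q := Nat.le_add_right _ _
    _ = Fintype.card ι * Fintype.card κ := by rw [hp, hq]; ring

theorem dvd_mul_finsetGcd {ι : Type*} {s : Finset ι} {f : ι → ℕ} {k n : ℕ}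
    (h : ∀ i ∈ s, k ∣ n * f i) : k ∣ n * s.gcd f := by
  simpa [Finset.gcd_mul_left] using Finset.dvd_gcd h

theorem sum_le_sum_of_eq_mul {ι κ : Type*} [Fintype ι] [Fintype κ] {x m : ι → ℕ} {y n : κ → ℕ}
    {c : ℝ} (hgcd : Nat.gcd (univ.gcd x) (univ.gcd y) = 1) (hx : ∀ i, 0 < x i)
    (hm : ∀ i, (x i : ℝ) = m i * c) (hn : ∀ j, (y j : ℝ) = n j * c) :
    ∑ i, x i ≤ ∑ i, m i := by
  refine sum_le_sum fun i _ => Nat.le_of_dvd ?_ ?_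
  · refine Nat.pos_of_ne_zero fun h => (hx i).ne' ?_
    simpa [h] using hm i
  have hcross_x (j) : m i * x j = x i * m j := by
    rify
    rw [hm i, hm j]
    ring
  have hcross_y (j) : m i * y j = x i * n j := by
    rify
    rw [hm i, hn j]
    ring
  have hdvd_x : x i ∣ m i * univ.gcd x := dvd_mul_finsetGcd fun j _ => ⟨m j, hcross_x j⟩
  have hdvd_y : x i ∣ m i * univ.gcd y := dvd_mul_finsetGcd fun j _ => ⟨n j, hcross_y j⟩
  simpa [Nat.gcd_mul_left, hgcd] using Nat.dvd_gcd hdvd_x hdvd_y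

end Integrality

theorem sum_le_of_no_connection_graph_general {a b : ℕ} (x : Fin a → ℝ) (y : Fin b → ℝ)
    (hx : ∀ i, 0 < x i) (hy : ∀ j, 0 < y j) (hsum : ∑ i, x i = ∑ j, y j)
    (hno : ¬ ∃ G : SimpleGraph (Fin a ⊕ Fin b), IsConnectionGraph G x y) :
    ∃ c > 0, ∃ (m : Fin a → ℕ) (n : Fin b → ℕ), (∀ i, x i = m i * c) ∧ (∀ j, y j = n j * c) ∧
      2 * ∑ i, m i ≤ a * b := by
  rcases isEmpty_or_nonempty (Fin a) with ha | ha
  · have hy_zero := (sum_eq_zero_iff_of_nonneg fun j _ => (hy j).le).mp (by simpa using hsum.symm)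
    exact ⟨1, one_pos, 0, 0, isEmptyElim, by simpa using hy_zero, by simp⟩
  have hz : ∀ v, 0 < Sum.elim x y v := Sum.forall.mpr ⟨hx, hy⟩
  obtain ⟨G, hG, htree⟩ | ⟨c, hc, k, hk, hcard⟩ := exists_isTree_or_exists_nsmul_eq hz hsum
  · exact (hno ⟨G, hG.isConnectionGraph htree hx hy hsum⟩).elim
  simp only [nsmul_eq_mul] at hk
  have hk_pos (v) : 0 < k v := Nat.pos_of_ne_zero fun h => (hz v).ne' (by simp [hk, h])
  have hk_sum : ∑ i, k (.inl i) = ∑ j, k (.inr j) := by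
    have : (∑ i, (k (.inl i) : ℝ)) * c = (∑ j, (k (.inr j) : ℝ)) * c := by
      simpa only [sum_mul, ← hk, Sum.elim_inl, Sum.elim_inr] using hsum
    exact_mod_cast mul_right_cancel₀ hc.ne' this
  refine ⟨c, hc, _, _, fun i => hk (.inl i), fun j => hk (.inr j), ?_⟩
  rw [Fintype.sum_sum_type, ← hk_sum] at hcard
  simpa using two_mul_sum_le_card_mul_card (fun i => hk_pos (.inl i)) (fun j => hk_pos (.inr j))
    hk_sum (by simp only [Nat.card_fin, Fintype.card_fin] at hcard ⊢; omega)

/-- If `x₁,…,x_a` and `y₁,…,y_b` are strictly positive integers with overall gcd `1` and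
equal sums, and there is no connection graph with the `x_i` on one side and the `y_j` on the
other, then `∑ x_i ≤ a·b/2`. -/
theorem sum_le_of_no_connection_graph (a b : ℕ) (x : Fin a → ℕ) (y : Fin b → ℕ)
    (hx : ∀ i, 0 < x i) (hy : ∀ j, 0 < y j)
    (hgcd : Nat.gcd (Finset.univ.gcd x) (Finset.univ.gcd y) = 1)
    (hsum : ∑ i, x i = ∑ j, y j)
    (hno : ¬ ∃ G : SimpleGraph (Fin a ⊕ Fin b),
        IsConnectionGraph G (fun i => (x i : ℝ)) (fun j => (y j : ℝ))) :
    2 * ∑ i, x i ≤ a * b := by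
  obtain ⟨c, -, m, n, hm, hn, hle⟩ := sum_le_of_no_connection_graph_general _ _
    (fun i => Nat.cast_pos.mpr (hx i)) (fun j => Nat.cast_pos.mpr (hy j)) (mod_cast hsum) hno
  exact (Nat.mul_le_mul_left 2 (sum_le_sum_of_eq_mul hgcd hx hm hn)).trans hle
end
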